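/- Let μ = L*_α(ν, γ) be the distribution on ℝ^d with characteristic exponent C(z) = i⟨γ,z⟩ + ∫_{ℝ^d} ∫_0^1 (e^{ir⟨z,y⟩} - 1)(-log r)^(α-1) r^(-1) dr ν(dy), where ν is a finite measure with ∫ |y|^2 ν(dy) < ∞. Then X ~ μ has mean E[X] = γ + Γ(α) ∫_{ℝ^d} y ν(dy) and covariance matrix cov(X) = (Γ(α)/2^α) ∫_{ℝ^d} y yᵀ ν(dy). -/

import Mathlib

open MeasureTheory Real Complex
open scoped RealInnerProductSpace ENNReal

/-!
The two moments of `⟪z, x⟫` under `μ` are read off the expansion of `t ↦ charFun μ (t • z)` up to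
`o(t ^ 2)`. That expansion comes from the Lévy exponent by dominated convergence, and it forces
a finite second moment by Fatou's lemma applied to `(1 - cos (t ⟪z, x⟫)) / t ^ 2`.
So the mean is `γ` plus the mean of the Lévy measure, and, after polarization, the covariance is the
second moment form of the Lévy measure. The Lévy measure of `L*_α(ν, γ)` is the image of
`(-log r) ^ (α - 1) r⁻¹ dr ⊗ ν` under `(r, y) ↦ r • y`, so its moments factor, and the radial factor
`∫ r ^ s (-log r) ^ (α - 1) r⁻¹ dr = Γ(α) / s ^ α` is the Gamma integral after `r = e ^ (-u)`.
-/

open Filter Asymptotics ProbabilityTheory Topology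

section QuadraticExpansion

/-- The expansion `φ t = b t + c t ^ 2 + o(t ^ 2)` as `t → 0`; the value `φ 0` is irrelevant. It is
used to read the first two moments of a law off its characteristic function. -/
def HasQuadraticExpansion (φ : ℝ → ℂ) (b c : ℂ) : Prop :=
  Tendsto (fun t : ℝ ↦ (φ t - t * b) / (t : ℂ) ^ 2) (𝓝[≠] 0) (𝓝 c)

namespace HasQuadraticExpansion

variable {φ : ℝ → ℂ} {b b' c c' : ℂ}

lemma tendsto_div (h : HasQuadraticExpansion φ b c) :
    Tendsto (fun t : ℝ ↦ φ t / t) (𝓝[≠] 0) (𝓝 b) := by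
  have ht : Tendsto (fun t : ℝ ↦ (t : ℂ)) (𝓝[≠] 0) (𝓝 0) :=
    (continuous_ofReal.tendsto' 0 0 ofReal_zero).mono_left nhdsWithin_le_nhds
  have hlim := (h.mul ht).add_const b
  rw [mul_zero, zero_add] at hlim
  refine hlim.congr' ?_
  filter_upwards [self_mem_nhdsWithin] with t ht0
  have : (t : ℂ) ≠ 0 := ofReal_ne_zero.2 ht0
  field_simp
  ring

lemma isBigO_ofReal (h : HasQuadraticExpansion φ b c) :
    φ =O[𝓝[≠] 0] fun t : ℝ ↦ (t : ℂ) := by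
  refine isBigO_of_div_tendsto_nhds ?_ b h.tendsto_div
  filter_upwards [self_mem_nhdsWithin] with t ht ht0
  exact absurd (ofReal_eq_zero.1 ht0) ht

lemma tendsto_zero (h : HasQuadraticExpansion φ b c) : Tendsto φ (𝓝[≠] 0) (𝓝 0) :=
  h.isBigO_ofReal.trans_tendsto <|
    (continuous_ofReal.tendsto' 0 0 ofReal_zero).mono_left nhdsWithin_le_nhds

lemma unique (h : HasQuadraticExpansion φ b c) (h' : HasQuadraticExpansion φ b' c') :
    b = b' ∧ c = c' := by
  obtain rfl : b = b' := tendsto_nhds_unique h.tendsto_div h'.tendsto_div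
  exact ⟨rfl, tendsto_nhds_unique h h'⟩

lemma const_mul_add (a : ℂ) (h : HasQuadraticExpansion φ b c) :
    HasQuadraticExpansion (fun t ↦ t * a + φ t) (a + b) c :=
  h.congr fun t ↦ by ring

lemma cexp_sub_one (h : HasQuadraticExpansion φ b c) :
    HasQuadraticExpansion (fun t ↦ cexp (φ t) - 1) b (c + b ^ 2 / 2) := by
  have hrem : Tendsto (fun t : ℝ ↦ (cexp (φ t) - 1 - φ t - φ t ^ 2 / 2) / (t : ℂ) ^ 2)
      (𝓝[≠] 0) (𝓝 0) := by
    have hexp := (Complex.exp_sub_sum_range_succ_isLittleO_pow 2).comp_tendsto h.tendsto_zero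
    refine (hexp.trans_isBigO (h.isBigO_ofReal.pow 2)).tendsto_div_nhds_zero.congr fun t ↦ ?_
    simp [Finset.sum_range_succ, sub_sub, add_assoc]
  have hlim := (Tendsto.add h ((h.tendsto_div.pow 2).div_const 2)).add hrem
  rw [add_zero] at hlim
  exact hlim.congr fun t ↦ by ring

lemma tendsto_re_div_sq {m : ℝ} (h : HasQuadraticExpansion φ (m * I) c) :
    Tendsto (fun t ↦ (φ t).re / t ^ 2) (𝓝[≠] 0) (𝓝 c.re) := by
  refine ((continuous_re.tendsto c).comp h).congr fun t ↦ ?_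
  rw [Function.comp_apply, ← ofReal_pow, div_ofReal_re]
  simp

end HasQuadraticExpansion

lemma hasQuadraticExpansion_cexp_sub_one (x : ℝ) :
    HasQuadraticExpansion (fun t ↦ cexp ((t * x : ℝ) * I) - 1) (x * I)
      ((-(x ^ 2) / 2 : ℝ) : ℂ) := by
  have hlin : HasQuadraticExpansion (fun t ↦ (t * x : ℝ) * I) (x * I) 0 :=
    tendsto_const_nhds.congr fun t ↦ by simp [mul_assoc]
  convert hlin.cexp_sub_one using 1
  push_cast
  rw [mul_pow, I_sq]
  ring

end QuadraticExpansion

section Moments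

lemma norm_cexp_ofReal_mul_I_sub_one_le (x : ℝ) : ‖cexp (x * I) - 1‖ ≤ |x| := by
  simpa [mul_comm] using norm_exp_I_mul_ofReal_sub_one_le (x := x)

lemma norm_cexp_ofReal_mul_I_sub_one_sub_le (x : ℝ) :
    ‖cexp (x * I) - 1 - x * I‖ ≤ 2 * x ^ 2 := by
  have hnorm : ‖(x : ℂ) * I‖ = |x| := by simp
  rcases le_total |x| 1 with hx | hx
  · have := norm_exp_sub_one_sub_id_le (hnorm.trans_le hx)
    rw [hnorm, sq_abs] at this
    linarith [sq_nonneg x]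
  · calc ‖cexp (x * I) - 1 - x * I‖ ≤ |x| + |x| :=
        (norm_sub_le _ _).trans (add_le_add (norm_cexp_ofReal_mul_I_sub_one_le x) hnorm.le)
      _ ≤ 2 * x ^ 2 := by nlinarith [sq_abs x]

variable {X Y : Type*} {mX : MeasurableSpace X} {mY : MeasurableSpace Y} {P : Measure X}
  {ρ : Measure Y} {f : X → ℝ} {g : Y → ℝ}

lemma integrable_cexp_mul_I_sub_one (hg : Integrable g ρ) (t : ℝ) :
    Integrable (fun y ↦ cexp ((t * g y : ℝ) * I) - 1) ρ :=
  (hg.const_mul t).abs.mono' (by fun_prop)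
    (.of_forall fun y ↦ norm_cexp_ofReal_mul_I_sub_one_le (t * g y))

lemma hasQuadraticExpansion_integral_cexp_sub_one (hg : Integrable g ρ) (hg2 : MemLp g 2 ρ) :
    HasQuadraticExpansion (fun t ↦ ∫ y, (cexp ((t * g y : ℝ) * I) - 1) ∂ρ)
      ((∫ y, g y ∂ρ : ℝ) * I) ((-(∫ y, g y ^ 2 ∂ρ) / 2 : ℝ) : ℂ) := by
  have hquot (t : ℝ) : ∫ y, (cexp ((t * g y : ℝ) * I) - 1 - t * (g y * I)) / (t : ℂ) ^ 2 ∂ρ =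
      (∫ y, (cexp ((t * g y : ℝ) * I) - 1) ∂ρ - t * ((∫ y, g y ∂ρ : ℝ) * I)) / (t : ℂ) ^ 2 := by
    have hlin : Integrable (fun y ↦ (t : ℂ) * (g y * I)) ρ := (hg.ofReal.mul_const I).const_mul _
    rw [integral_div, integral_sub (integrable_cexp_mul_I_sub_one hg t) hlin, integral_const_mul,
      integral_mul_const, integral_complex_ofReal]
  have hlim : ∫ y, ((-(g y ^ 2) / 2 : ℝ) : ℂ) ∂ρ = ((-(∫ y, g y ^ 2 ∂ρ) / 2 : ℝ) : ℂ) := by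
    rw [integral_complex_ofReal, integral_div, integral_neg]
  rw [HasQuadraticExpansion, ← hlim]
  refine (tendsto_integral_filter_of_dominated_convergence (fun y ↦ 2 * g y ^ 2)
    (.of_forall fun t ↦ ?_) ?_ (hg2.integrable_sq.const_mul 2)
    (.of_forall fun y ↦ hasQuadraticExpansion_cexp_sub_one (g y))).congr hquot
  · have := hg.aestronglyMeasurable
    fun_prop
  · filter_upwards [self_mem_nhdsWithin] with t ht
    refine .of_forall fun y ↦ ?_
    have ht2 : 0 < t ^ 2 := sq_pos_of_ne_zero ht
    have hbound := norm_cexp_ofReal_mul_I_sub_one_sub_le (t * g y)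
    rw [norm_div, norm_pow, norm_real, Real.norm_eq_abs, sq_abs, div_le_iff₀ ht2]
    calc _ = ‖cexp ((t * g y : ℝ) * I) - 1 - (t * g y : ℝ) * I‖ := by push_cast; ring_nf
      _ ≤ _ := by linarith

lemma integrable_of_tendsto_of_nonneg {ι : Type*} {l : Filter ι} [l.NeBot]
    [l.IsCountablyGenerated] {F : ι → X → ℝ} {c : ℝ} (hF : ∀ i, Integrable (F i) P)
    (hF_nonneg : ∀ i x, 0 ≤ F i x) (hlim : ∀ x, Tendsto (F · x) l (𝓝 (f x)))
    (hint : Tendsto (fun i ↦ ∫ x, F i x ∂P) l (𝓝 c)) : Integrable f P := by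
  have hf_nonneg (x : X) : 0 ≤ f x := ge_of_tendsto' (hlim x) fun i ↦ hF_nonneg i x
  have hfatou : ∫⁻ x, .ofReal (f x) ∂P ≤ .ofReal c :=
    calc ∫⁻ x, .ofReal (f x) ∂P = ∫⁻ x, liminf (fun i ↦ .ofReal (F i x)) l ∂P :=
          lintegral_congr fun x ↦ (ENNReal.tendsto_ofReal (hlim x)).liminf_eq.symm
      _ ≤ liminf (fun i ↦ ∫⁻ x, .ofReal (F i x) ∂P) l :=
          lintegral_liminf_le' fun i ↦ (hF i).aemeasurable.ennreal_ofReal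
      _ = .ofReal c := by
          simp_rw [← ofReal_integral_eq_lintegral_ofReal (hF _) (.of_forall (hF_nonneg _))]
          exact (ENNReal.tendsto_ofReal hint).liminf_eq
  exact ⟨aestronglyMeasurable_of_tendsto_ae l (fun i ↦ (hF i).1) (.of_forall hlim),
    (hasFiniteIntegral_iff_ofReal (.of_forall hf_nonneg)).2
      (hfatou.trans_lt ENNReal.ofReal_lt_top)⟩

lemma memLp_two_of_hasQuadraticExpansion [IsFiniteMeasure P] (hf : AEStronglyMeasurable f P)
    {m : ℝ} {c : ℂ}
    (h : HasQuadraticExpansion (fun t ↦ ∫ x, (cexp ((t * f x : ℝ) * I) - 1) ∂P) (m * I) c) :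
    MemLp f 2 P := by
  have hexp (t : ℝ) : Integrable (fun x ↦ cexp ((t * f x : ℝ) * I) - 1) P :=
    (Integrable.of_bound (by fun_prop) 1
      (.of_forall fun x ↦ (norm_exp_ofReal_mul_I _).le)).sub (integrable_const 1)
  have hhalf : Integrable (fun x ↦ f x ^ 2 / 2) P := by
    refine integrable_of_tendsto_of_nonneg (l := 𝓝[≠] 0) (c := -c.re)
      (F := fun t x ↦ -((cexp ((t * f x : ℝ) * I) - 1).re / t ^ 2))
      (fun t ↦ ((hexp t).re.div_const _).neg) (fun t x ↦ ?_) (fun x ↦ ?_) ?_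
    · rw [sub_re, exp_ofReal_mul_I_re, one_re]
      exact neg_nonneg.2 (div_nonpos_of_nonpos_of_nonneg
        (sub_nonpos.2 (Real.cos_le_one _)) (sq_nonneg t))
    · have := (hasQuadraticExpansion_cexp_sub_one (f x)).tendsto_re_div_sq.neg
      rwa [ofReal_re, neg_div, neg_neg] at this
    · refine h.tendsto_re_div_sq.neg.congr fun t ↦ ?_
      rw [integral_neg, integral_div]
      exact congrArg (-(· / t ^ 2)) (integral_re (hexp t)).symm
  rw [memLp_two_iff_integrable_sq hf]
  exact (hhalf.const_mul 2).congr (.of_forall fun x ↦ by ring)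

theorem moments_of_integral_cexp_eq [IsProbabilityMeasure P] (hf : AEStronglyMeasurable f P)
    (hg : Integrable g ρ) (hg2 : MemLp g 2 ρ) {a : ℝ}
    (hfg : ∀ t : ℝ, ∫ x, cexp ((t * f x : ℝ) * I) ∂P =
      cexp ((t * a : ℝ) * I + ∫ y, (cexp ((t * g y : ℝ) * I) - 1) ∂ρ)) :
    MemLp f 2 P ∧ P[f] = a + ∫ y, g y ∂ρ ∧ Var[f; P] = ∫ y, g y ^ 2 ∂ρ := by
  have hexp : HasQuadraticExpansion (fun t ↦ ∫ x, (cexp ((t * f x : ℝ) * I) - 1) ∂P)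
      ((a + ∫ y, g y ∂ρ : ℝ) * I)
      ((-(∫ y, g y ^ 2 ∂ρ + (a + ∫ y, g y ∂ρ) ^ 2) / 2 : ℝ) : ℂ) := by
    convert ((hasQuadraticExpansion_integral_cexp_sub_one hg hg2).const_mul_add
      (a * I)).cexp_sub_one using 1
    · ext t
      have hint : Integrable (fun x ↦ cexp ((t * f x : ℝ) * I)) P :=
        .of_bound (by fun_prop) 1 (.of_forall fun x ↦ (norm_exp_ofReal_mul_I _).le)
      rw [integral_sub hint (integrable_const 1), hfg]
      simp [mul_assoc]
    · push_cast
      ring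
    · push_cast
      rw [← add_mul, mul_pow, I_sq]
      ring
  have hf2 : MemLp f 2 P := memLp_two_of_hasQuadraticExpansion hf hexp
  obtain ⟨hmean, hsq⟩ := hexp.unique
    (hasQuadraticExpansion_integral_cexp_sub_one (hf2.integrable one_le_two) hf2)
  have hmean' : P[f] = a + ∫ y, g y ∂ρ :=
    (ofReal_injective (mul_right_cancel₀ I_ne_zero hmean)).symm
  refine ⟨hf2, hmean', ?_⟩
  rw [variance_eq_sub hf2, hmean', Pi.pow_def]
  linarith [ofReal_injective hsq]

end Moments

section HilbertSpace

variable {E Ω : Type*} [NormedAddCommGroup E] {mΩ : MeasurableSpace Ω} {P : Measure Ω}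

lemma memLp_two_iff_lintegral_enorm_sq_lt_top {f : Ω → E} (hf : AEStronglyMeasurable f P) :
    MemLp f 2 P ↔ ∫⁻ ω, ‖f ω‖ₑ ^ 2 ∂P < ∞ := by
  have := eLpNorm_lt_top_iff_lintegral_rpow_enorm_lt_top (μ := P) (f := f)
    two_ne_zero ENNReal.ofNat_ne_top
  simp only [ENNReal.toReal_ofNat, ENNReal.rpow_ofNat] at this
  rw [MemLp, and_iff_right hf, this]

lemma enorm_sq_eq_ofReal_sq (r : ℝ) : ‖r‖ₑ ^ 2 = .ofReal (r ^ 2) := by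
  rw [Real.enorm_eq_ofReal_abs, ← ENNReal.ofReal_pow (abs_nonneg r), sq_abs]

lemma lintegral_enorm_sq_eq_ofReal_integral_sq {f : Ω → ℝ} (hf : MemLp f 2 P) :
    ∫⁻ ω, ‖f ω‖ₑ ^ 2 ∂P = .ofReal (∫ ω, f ω ^ 2 ∂P) := by
  rw [ofReal_integral_eq_lintegral_ofReal hf.integrable_sq (.of_forall fun ω ↦ sq_nonneg _)]
  exact lintegral_congr fun ω ↦ enorm_sq_eq_ofReal_sq _

variable [InnerProductSpace ℝ E] {ι : Type*}

lemma countable_of_orthonormal [TopologicalSpace.SeparableSpace E] {v : ι → E}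
    (hv : Orthonormal ℝ v) : Countable ι := by
  refine Pairwise.countable_of_isOpen_disjoint (s := fun i ↦ Metric.ball (v i) (1 / 2))
    (fun i j hij ↦ Metric.ball_disjoint_ball ?_) (fun _ ↦ Metric.isOpen_ball)
    fun i ↦ ⟨v i, Metric.mem_ball_self one_half_pos⟩
  rw [add_halves, dist_eq_norm, ← one_le_sq_iff₀ (norm_nonneg _), @norm_sub_sq_real,
    hv.1 i, hv.1 j, hv.2 hij]
  norm_num

lemma enorm_sq_eq_tsum_enorm_inner_sq (b : HilbertBasis ι ℝ E) (x : E) :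
    ‖x‖ₑ ^ 2 = ∑' i, ‖⟪b i, x⟫‖ₑ ^ 2 := by
  have hsum : HasSum (fun i ↦ ⟪b i, x⟫ ^ 2) (‖x‖ ^ 2) := by
    simpa only [real_inner_comm, ← sq, real_inner_self_eq_norm_sq] using
      b.hasSum_inner_mul_inner x x
  rw [← enorm_norm]
  simp_rw [enorm_sq_eq_ofReal_sq]
  rw [← ENNReal.ofReal_tsum_of_nonneg (fun _ ↦ sq_nonneg _) hsum.summable, hsum.tsum_eq]

lemma lintegral_enorm_sq_eq_tsum [Countable ι] (b : HilbertBasis ι ℝ E) {f : Ω → E}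
    (hf : AEStronglyMeasurable f P) :
    ∫⁻ ω, ‖f ω‖ₑ ^ 2 ∂P = ∑' i, ∫⁻ ω, ‖⟪b i, f ω⟫‖ₑ ^ 2 ∂P := by
  simp_rw [enorm_sq_eq_tsum_enorm_inner_sq b]
  exact lintegral_tsum fun i ↦ by fun_prop

end HilbertSpace

section LevyExponent

variable {E : Type*} [NormedAddCommGroup E] [InnerProductSpace ℝ E] [MeasurableSpace E]
  {μ ρ : Measure E} {γ : E}

/-- `μ` has the characteristic function of the infinitely divisible law with drift `γ`, Lévy measure
`ρ` and no Gaussian part. The exponent is not compensated: `γ` is the genuine drift, which makes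
sense for Lévy measures with a first moment. -/
def HasLevyExponent (μ : Measure E) (γ : E) (ρ : Measure E) : Prop :=
  ∀ z, charFun μ z = cexp (⟪γ, z⟫ * I + ∫ y, (cexp (⟪y, z⟫ * I) - 1) ∂ρ)

namespace HasLevyExponent

variable [BorelSpace E] [SecondCountableTopology E] [CompleteSpace E] [IsProbabilityMeasure μ]

lemma moments_inner (h : HasLevyExponent μ γ ρ) (hρ : Integrable id ρ) (hρ2 : MemLp id 2 ρ)
    (z : E) :
    MemLp (fun x ↦ ⟪z, x⟫) 2 μ ∧ ∫ x, ⟪z, x⟫ ∂μ = ⟪z, γ + ∫ y, y ∂ρ⟫ ∧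
      Var[fun x ↦ ⟪z, x⟫; μ] = ∫ y, ⟪z, y⟫ ^ 2 ∂ρ := by
  have hmean : ⟪z, γ + ∫ y, y ∂ρ⟫ = ⟪γ, z⟫ + ∫ y, ⟪z, y⟫ ∂ρ := by
    rw [inner_add_right, real_inner_comm, ← integral_inner (f := fun y ↦ y) hρ]
  rw [hmean]
  refine moments_of_integral_cexp_eq (by fun_prop) (hρ.const_inner z) (hρ2.const_inner z)
    fun t ↦ ?_
  simpa only [charFun_apply, inner_smul_right, real_inner_comm, id] using h (t • z)

theorem memLp_two (h : HasLevyExponent μ γ ρ) (hρ : Integrable id ρ) (hρ2 : MemLp id 2 ρ) :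
    MemLp id 2 μ := by
  obtain ⟨ι, b, -⟩ := exists_hilbertBasis ℝ E
  have : Countable ι := countable_of_orthonormal b.orthonormal
  rw [memLp_two_iff_lintegral_enorm_sq_lt_top aestronglyMeasurable_id]
  set m : E := γ + ∫ y, y ∂ρ
  have hdir (i : ι) : ∫⁻ x, ‖⟪b i, x⟫‖ₑ ^ 2 ∂μ = ∫⁻ y, ‖⟪b i, y⟫‖ₑ ^ 2 ∂ρ + ‖⟪b i, m⟫‖ₑ ^ 2 := by
    obtain ⟨hL2, hmean, hvar⟩ := h.moments_inner hρ hρ2 (b i)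
    have hsecond : ∫ x, ⟪b i, x⟫ ^ 2 ∂μ = ∫ y, ⟪b i, y⟫ ^ 2 ∂ρ + ⟪b i, m⟫ ^ 2 := by
      rw [← hvar, ← hmean, variance_eq_sub hL2]
      simp
    rw [lintegral_enorm_sq_eq_ofReal_integral_sq hL2, hsecond, enorm_sq_eq_ofReal_sq,
      lintegral_enorm_sq_eq_ofReal_integral_sq (f := fun y ↦ ⟪b i, y⟫) (hρ2.const_inner (b i)),
      ENNReal.ofReal_add (by positivity) (by positivity)]
  calc ∫⁻ x, ‖x‖ₑ ^ 2 ∂μ = ∑' i, ∫⁻ x, ‖⟪b i, x⟫‖ₑ ^ 2 ∂μ :=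
        lintegral_enorm_sq_eq_tsum b aestronglyMeasurable_id
    _ = ∫⁻ y, ‖y‖ₑ ^ 2 ∂ρ + ‖m‖ₑ ^ 2 := by
        simp_rw [hdir, ENNReal.tsum_add, ← enorm_sq_eq_tsum_enorm_inner_sq]
        rw [lintegral_enorm_sq_eq_tsum b (f := fun y ↦ y) aestronglyMeasurable_id]
    _ < ∞ := ENNReal.add_lt_top.2
        ⟨(memLp_two_iff_lintegral_enorm_sq_lt_top hρ2.1).1 hρ2, by finiteness⟩

theorem integral_eq (h : HasLevyExponent μ γ ρ) (hρ : Integrable id ρ) (hρ2 : MemLp id 2 ρ) :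
    ∫ x, x ∂μ = γ + ∫ y, y ∂ρ :=
  ext_inner_left ℝ fun z ↦ by
    rw [← integral_inner (f := fun x ↦ x) ((h.memLp_two hρ hρ2).integrable one_le_two)]
    exact (h.moments_inner hρ hρ2 z).2.1

theorem covarianceBilin_eq (h : HasLevyExponent μ γ ρ) (hρ : Integrable id ρ)
    (hρ2 : MemLp id 2 ρ) (u v : E) :
    covarianceBilin μ u v = ∫ y, ⟪u, y⟫ * ⟪v, y⟫ ∂ρ := by
  have hdiag (z : E) : covarianceBilin μ z z = ∫ y, ⟪z, y⟫ ^ 2 ∂ρ := by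
    rw [covarianceBilin_self (h.memLp_two hρ hρ2)]
    exact (h.moments_inner hρ hρ2 z).2.2
  have hsq (z : E) : Integrable (fun y ↦ ⟪z, y⟫ ^ 2) ρ := (hρ2.const_inner z).integrable_sq
  have hpolar : 4 * covarianceBilin μ u v =
      covarianceBilin μ (u + v) (u + v) - covarianceBilin μ (u - v) (u - v) := by
    simp only [map_add, map_sub, add_apply, sub_apply,
      covarianceBilin_comm v u]
    ring
  calc covarianceBilin μ u v
      = (∫ y, ⟪u + v, y⟫ ^ 2 ∂ρ - ∫ y, ⟪u - v, y⟫ ^ 2 ∂ρ) / 4 := by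
        rw [← hdiag, ← hdiag, ← hpolar]
        ring
    _ = ∫ y, ⟪u, y⟫ * ⟪v, y⟫ ∂ρ := by
        rw [← integral_sub (hsq _) (hsq _), ← integral_div]
        congr with y
        rw [inner_add_left, inner_sub_left]
        ring

end HasLevyExponent

end LevyExponent

section LStar

variable {α : ℝ}

/-- The measure `(-log r) ^ (α - 1) r⁻¹ dr` on `(0, 1)`, along whose dilations the law `L*_α(ν, γ)`
spreads `ν` to obtain its Lévy measure. -/
noncomputable def lStarRadialMeasure (α : ℝ) : Measure ℝ :=
  (volume.restrict (Set.Ioo 0 1)).withDensity fun r ↦ .ofReal ((-Real.log r) ^ (α - 1) * r⁻¹)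

instance : SFinite (lStarRadialMeasure α) := by
  unfold lStarRadialMeasure
  infer_instance

lemma integral_lStarRadialMeasure {F : Type*} [NormedAddCommGroup F] [NormedSpace ℝ F]
    (f : ℝ → F) :
    ∫ r, f r ∂lStarRadialMeasure α =
      ∫ r in Set.Ioo 0 1, ((-Real.log r) ^ (α - 1) * r⁻¹) • f r := by
  rw [lStarRadialMeasure, integral_withDensity_eq_integral_toReal_smul (by fun_prop) (by simp)]
  refine setIntegral_congr_fun measurableSet_Ioo fun r ⟨hr0, hr1⟩ ↦ ?_
  have hlog : 0 ≤ -Real.log r := neg_nonneg.2 (Real.log_nonpos hr0.le hr1.le)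
  have hdensity : 0 ≤ (-Real.log r) ^ (α - 1) * r⁻¹ := by positivity
  simp only [ENNReal.toReal_ofReal hdensity]

lemma image_exp_neg_Ioi : (fun u ↦ Real.exp (-u)) '' Set.Ioi 0 = Set.Ioo 0 1 := by
  rw [← Set.image_image Real.exp Neg.neg, Set.image_neg_Ioi, neg_zero]
  ext r
  exact ⟨fun ⟨u, hu, hr⟩ ↦ hr ▸ ⟨Real.exp_pos u, Real.exp_lt_one_iff.2 hu⟩,
    fun ⟨hr0, hr1⟩ ↦ ⟨Real.log r, Real.log_neg hr0 hr1, Real.exp_log hr0⟩⟩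

lemma integral_rpow_lStarRadialMeasure (hα : 0 < α) {s : ℝ} (hs : 0 < s) :
    ∫ r, r ^ s ∂lStarRadialMeasure α = Real.Gamma α / s ^ α := by
  have hderiv (u : ℝ) : HasDerivAt (fun u ↦ Real.exp (-u)) (-Real.exp (-u)) u := by
    simpa using (hasDerivAt_neg u).exp
  have hgamma := Real.integral_rpow_mul_exp_neg_mul_Ioi hα hs
  rw [one_div, Real.inv_rpow hs.le, inv_mul_eq_div] at hgamma
  rw [integral_lStarRadialMeasure, ← image_exp_neg_Ioi,
    integral_image_eq_integral_abs_deriv_smul measurableSet_Ioi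
      (fun u _ ↦ (hderiv u).hasDerivWithinAt) (Real.exp_injective.comp neg_injective).injOn,
    ← hgamma]
  refine setIntegral_congr_fun measurableSet_Ioi fun u _ ↦ ?_
  have hexp : Real.exp (-u) ≠ 0 := (Real.exp_pos _).ne'
  simp only [abs_neg, Real.abs_exp, Real.log_exp, neg_neg, smul_eq_mul, ← Real.exp_mul,
    neg_mul, mul_comm u s]
  field_simp

lemma integrable_rpow_lStarRadialMeasure (hα : 0 < α) {s : ℝ} (hs : 0 < s) :
    Integrable (fun r ↦ r ^ s) (lStarRadialMeasure α) := by
  refine .of_integral_ne_zero ?_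
  rw [integral_rpow_lStarRadialMeasure hα hs]
  exact (div_pos (Real.Gamma_pos_of_pos hα) (Real.rpow_pos_of_pos hs α)).ne'

variable {E : Type*} [NormedAddCommGroup E] [InnerProductSpace ℝ E] [MeasurableSpace E]
  {μ ν : Measure E} {γ : E}

/-- The Lévy measure of `L*_α(ν, γ)`: the law of `r • y` when `(r, y)` is distributed as the product
of the radial measure and `ν`. -/
noncomputable def lStarLevyMeasure (α : ℝ) (ν : Measure E) : Measure E :=
  ((lStarRadialMeasure α).prod ν).map fun p ↦ p.1 • p.2

variable [BorelSpace E] [SecondCountableTopology E]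

lemma integral_lStarLevyMeasure {F : Type*} [NormedAddCommGroup F] [NormedSpace ℝ F]
    {f : E → F} (hf : AEStronglyMeasurable f (lStarLevyMeasure α ν)) :
    ∫ y, f y ∂lStarLevyMeasure α ν = ∫ p, f (p.1 • p.2) ∂(lStarRadialMeasure α).prod ν :=
  integral_map (by fun_prop) hf

lemma integrable_lStarLevyMeasure_iff {F : Type*} [NormedAddCommGroup F]
    {f : E → F} (hf : AEStronglyMeasurable f (lStarLevyMeasure α ν)) :
    Integrable f (lStarLevyMeasure α ν) ↔
      Integrable (fun p ↦ f (p.1 • p.2)) ((lStarRadialMeasure α).prod ν) :=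
  integrable_map_measure hf (by fun_prop)

lemma integrable_id_lStarLevyMeasure (hα : 0 < α) (hν : Integrable id ν) :
    Integrable id (lStarLevyMeasure α ν) := by
  rw [integrable_lStarLevyMeasure_iff aestronglyMeasurable_id]
  have hr := integrable_rpow_lStarRadialMeasure hα one_pos
  simp only [Real.rpow_one] at hr
  exact hr.smul_prod hν

lemma memLp_two_lStarLevyMeasure (hα : 0 < α) (hν : MemLp id 2 ν) :
    MemLp id 2 (lStarLevyMeasure α ν) := by
  rw [memLp_two_iff_integrable_sq_norm aestronglyMeasurable_id,
    integrable_lStarLevyMeasure_iff (by fun_prop)]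
  have hr := integrable_rpow_lStarRadialMeasure hα two_pos
  simp only [Real.rpow_two] at hr
  simpa only [id, norm_smul, mul_pow, Real.norm_eq_abs, sq_abs] using
    hr.mul_prod ((memLp_two_iff_integrable_sq_norm hν.1).1 hν)

variable [SFinite ν]

lemma integral_id_lStarLevyMeasure (hα : 0 < α) :
    ∫ y, y ∂lStarLevyMeasure α ν = Real.Gamma α • ∫ y, y ∂ν := by
  have hr := integral_rpow_lStarRadialMeasure hα one_pos
  simp only [Real.rpow_one, Real.one_rpow, div_one] at hr
  rw [integral_lStarLevyMeasure (f := fun y ↦ y) aestronglyMeasurable_id, ← hr]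
  exact integral_prod_smul (fun r ↦ r) fun y ↦ y

lemma integral_inner_mul_inner_lStarLevyMeasure (hα : 0 < α) (u v : E) :
    ∫ y, ⟪u, y⟫ * ⟪v, y⟫ ∂lStarLevyMeasure α ν =
      Real.Gamma α / 2 ^ α * ∫ y, ⟪u, y⟫ * ⟪v, y⟫ ∂ν := by
  have hr := integral_rpow_lStarRadialMeasure hα two_pos
  simp only [Real.rpow_two] at hr
  rw [integral_lStarLevyMeasure (by fun_prop), ← hr, ← integral_prod_mul]
  congr with p
  rw [real_inner_smul_right, real_inner_smul_right]
  ring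

lemma integral_cexp_sub_one_lStarLevyMeasure (hα : 0 < α) (hν : Integrable id ν) (z : E) :
    ∫ y, (cexp (⟪y, z⟫ * I) - 1) ∂lStarLevyMeasure α ν =
      ∫ y, (∫ r in Set.Ioo (0 : ℝ) 1, (cexp (r * ⟪z, y⟫ * I) - 1) *
        (((-Real.log r) ^ (α - 1) * r⁻¹ : ℝ) : ℂ)) ∂ν := by
  have hint : Integrable (fun y ↦ cexp (⟪y, z⟫ * I) - 1) (lStarLevyMeasure α ν) := by
    simpa [real_inner_comm] using integrable_cexp_mul_I_sub_one
      ((integrable_id_lStarLevyMeasure hα hν).const_inner z) 1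
  rw [integral_lStarLevyMeasure hint.1,
    integral_prod_symm _ ((integrable_lStarLevyMeasure_iff hint.1).1 hint)]
  refine integral_congr_ae (.of_forall fun y ↦ ?_)
  simp_rw [integral_lStarRadialMeasure, real_inner_smul_left, real_inner_comm, ofReal_mul,
    Complex.real_smul, mul_comm (cexp _ - 1), ofReal_mul]

theorem stmt15_general [CompleteSpace E] (hα : 0 < α) (hν : Integrable id ν) (hν2 : MemLp id 2 ν)
    [IsProbabilityMeasure μ]
    (hchar : ∀ z : E, ∫ x, cexp (⟪z, x⟫ * I) ∂μ =
      cexp (⟪γ, z⟫ * I + ∫ y, (∫ r in Set.Ioo (0 : ℝ) 1, (cexp (r * ⟪z, y⟫ * I) - 1) *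
        (((-Real.log r) ^ (α - 1) * r⁻¹ : ℝ) : ℂ)) ∂ν)) :
    MemLp id 2 μ ∧ ∫ x, x ∂μ = γ + Real.Gamma α • ∫ y, y ∂ν ∧
      ∀ u v : E, ∫ x, ⟪u, x - ∫ x', x' ∂μ⟫ * ⟪v, x - ∫ x', x' ∂μ⟫ ∂μ =
        Real.Gamma α / 2 ^ α * ∫ y, ⟪u, y⟫ * ⟪v, y⟫ ∂ν := by
  have hμ : HasLevyExponent μ γ (lStarLevyMeasure α ν) := fun z ↦ by
    rw [charFun_apply, integral_cexp_sub_one_lStarLevyMeasure hα hν, ← hchar]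
    simp_rw [real_inner_comm]
  have hL := integrable_id_lStarLevyMeasure hα hν
  have hL2 := memLp_two_lStarLevyMeasure hα hν2
  have hμ2 : MemLp id 2 μ := hμ.memLp_two hL hL2
  refine ⟨hμ2, ?_, fun u v ↦ ?_⟩
  · rw [hμ.integral_eq hL hL2, integral_id_lStarLevyMeasure hα]
  · rw [← integral_inner_mul_inner_lStarLevyMeasure hα, ← hμ.covarianceBilin_eq hL hL2,
      covarianceBilin_apply hμ2]
    rfl

end LStar

/-- Let `μ = L*_α(ν, γ)` on `ℝ^d`, i.e. the probability measure with characteristic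
exponent `C(z) = i⟨γ,z⟩ + ∫ ∫_0^1 (e^{i r⟨z,y⟩} - 1)(-log r)^(α-1) r⁻¹ dr ν(dy)`,
with `ν` finite, `ν({0}) = 0` and `∫ ‖y‖² ν(dy) < ∞`. Then `X ~ μ` has mean
`γ + Γ(α) ∫ y ν(dy)` and covariance matrix `(Γ(α)/2^α) ∫ y yᵀ ν(dy)`. -/
theorem stmt15 {d : ℕ} (α : ℝ) (hα : 0 < α)
    (γ : EuclideanSpace ℝ (Fin d))
    (ν : Measure (EuclideanSpace ℝ (Fin d))) [IsFiniteMeasure ν] (hν0 : ν {0} = 0)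
    (hν2 : (∫⁻ y, ENNReal.ofReal (‖y‖ ^ 2) ∂ν) < ∞)
    (μ : Measure (EuclideanSpace ℝ (Fin d))) [IsProbabilityMeasure μ]
    (hchar : ∀ z : EuclideanSpace ℝ (Fin d),
      (∫ x, Complex.exp ((⟪z, x⟫ : ℝ) * Complex.I) ∂μ) =
        Complex.exp ((⟪γ, z⟫ : ℝ) * Complex.I +
          ∫ y, (∫ r in Set.Ioo (0 : ℝ) 1,
            (Complex.exp ((r : ℝ) * (⟪z, y⟫ : ℝ) * Complex.I) - 1) *
              (((-Real.log r) ^ (α - 1) * r⁻¹ : ℝ) : ℂ)) ∂ν)) :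
    (∫ x, x ∂μ) = γ + Real.Gamma α • (∫ y, y ∂ν) ∧
    ∀ i j : Fin d,
      (∫ x, (x i - (∫ x', x' ∂μ) i) * (x j - (∫ x', x' ∂μ) j) ∂μ) =
        (Real.Gamma α / 2 ^ α) * ∫ y, y i * y j ∂ν := by
  have hν : MemLp id 2 ν := by
    rw [memLp_two_iff_lintegral_enorm_sq_lt_top aestronglyMeasurable_id]
    simpa only [id, ENNReal.ofReal_pow (norm_nonneg _), ofReal_norm] using hν2
  obtain ⟨-, hmean, hcov⟩ := stmt15_general hα (hν.integrable one_le_two) hν hchar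
  refine ⟨hmean, fun i j ↦ ?_⟩
  simpa [EuclideanSpace.inner_single_left] using
    hcov (EuclideanSpace.single i 1) (EuclideanSpace.single j 1)
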